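/- Let k ≥ 2 and t ≥ 2 be integers and let G be a fixed edge-critical graph with chromatic number χ(G) = k + 1. Then there exists n₀ such that for all integers n ≥ n₀, every 2-coloring with colors red and blue of the edges of the graph obtained from the complete graph on k·n·t vertices by adding one new vertex joined to exactly (k−1)·n·t + t of its vertices contains either a red copy of G or a blue copy of K₁ + nK_t. -/

import Mathlib

open SimpleGraph

/-- `containsCopy F G` : the graph `F` contains a copy of the graph `G` (as a subgraph). -/
def containsCopy {V W : Type*} (F : SimpleGraph V) (G : SimpleGraph W) : Prop :=
  ∃ f : G →g F, Function.Injective f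

/-- `arrows N G H` : every red/blue coloring of the edges of `K_N` (given by the graph `R` of
red edges, whose complement is the graph of blue edges) contains a red copy of `G` or a
blue copy of `H`. -/
def arrows {V W : Type*} (N : ℕ) (G : SimpleGraph V) (H : SimpleGraph W) : Prop :=
  ∀ R : SimpleGraph (Fin N), containsCopy R G ∨ containsCopy Rᶜ H

/-- The Ramsey number `R(G, H)`. -/
noncomputable def ramseyNumber {V W : Type*} (G : SimpleGraph V) (H : SimpleGraph W) : ℕ :=
  sInf { N : ℕ | 0 < N ∧ arrows N G H }

/-- The generalized fan `K₁ + nK_t` : the join of a single vertex (`none`) with `n` disjoint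
copies of `K_t`. -/
def genFan (n t : ℕ) : SimpleGraph (Option (Fin n × Fin t)) :=
  SimpleGraph.fromRel (fun a b =>
    a = none ∨ ∃ p q : Fin n × Fin t, a = some p ∧ b = some q ∧ p.1 = q.1)

/-- A graph `G` is edge-critical if it has an edge `e` with `χ(G - e) = χ(G) - 1`. -/
def EdgeCritical {V : Type*} (G : SimpleGraph V) : Prop :=
  ∃ u v : V, G.Adj u v ∧ (G.deleteEdges {s(u, v)}).chromaticNumber + 1 = G.chromaticNumber

/-- `K_m ⊔ K_{1,ℓ}` : the complete graph on the `m` vertices `some i`, together with one new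
vertex `none` joined to exactly the `ℓ` vertices `some i` with `i < ℓ` (for `ℓ ≤ m`). -/
def KstarK (m ℓ : ℕ) : SimpleGraph (Option (Fin m)) :=
  SimpleGraph.fromRel (fun a b =>
    ((∃ i : Fin m, a = some i) ∧ ∃ j : Fin m, b = some j) ∨
      (a = none ∧ ∃ j : Fin m, b = some j ∧ (j : ℕ) < ℓ))

/-- `starArrows m ℓ G H` : every red/blue coloring of the edges of `K_m ⊔ K_{1,ℓ}` (the red
edges forming a subgraph `R`, the blue edges the remaining edges) contains a red copy of `G`
or a blue copy of `H`. -/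
def starArrows {V W : Type*} (m ℓ : ℕ) (G : SimpleGraph V) (H : SimpleGraph W) : Prop :=
  ∀ R : SimpleGraph (Option (Fin m)), R ≤ KstarK m ℓ →
    containsCopy R G ∨ containsCopy (KstarK m ℓ \ R) H

/-- The star-critical Ramsey number `r₊(G, H)`. -/
noncomputable def starRamsey {V W : Type*} (G : SimpleGraph V) (H : SimpleGraph W) : ℕ :=
  sInf { ℓ : ℕ | starArrows (ramseyNumber G H - 1) ℓ G H }

/-- The chromatic number of `G` as a natural number. -/
noncomputable def chromNum {V : Type*} (G : SimpleGraph V) : ℕ := G.chromaticNumber.toNat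

/-- `s(G)` : the minimum size of a color class over all proper `χ(G)`-colorings of `G`. -/
noncomputable def minClassSize {V : Type*} (G : SimpleGraph V) : ℕ :=
  sInf { m : ℕ | ∃ C : G.Coloring (Fin (chromNum G)), ∃ i : Fin (chromNum G),
    m = {v | C v = i}.ncard }

/-- `τ(G)` : the minimum, over all proper `χ(G)`-colorings of `G` having a color class `U_j`
of size `s(G)`, over all vertices `v ∈ U_j` and all other color classes `U_i`, of the number
of neighbors of `v` in `U_i`. -/
noncomputable def tauNum {V : Type*} (G : SimpleGraph V) : ℕ :=
  sInf { m : ℕ | ∃ C : G.Coloring (Fin (chromNum G)), ∃ j : Fin (chromNum G),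
    {v | C v = j}.ncard = minClassSize G ∧
    ∃ v, C v = j ∧ ∃ i : Fin (chromNum G), i ≠ j ∧ m = {u | C u = i ∧ G.Adj v u}.ncard }

/-! Write `d = n * t`, and suppose that the red graph `R` is free of `G` and the blue graph is free
of the fan. Choosing blue cliques greedily among the blue neighbors of a vertex, and using Ramsey's
theorem for as long as enough of these are left, shows that every vertex has at most `d + O(1)` red
non-neighbors. On the `k * d` old vertices, Erdős–Stone then provides a complete `k`-partite red
graph with large parts. Every vertex has few red neighbors in at least one part: otherwise it can
play one end of the critical edge, and a neighbor in some part the other, and `G` embeds greedily.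
Sending each vertex to such a part is a proper coloring of `R` outside a small exceptional set: two
adjacent vertices sent to one part, with few non-neighbors in the others, would again give `G`, and
averaging the red non-degrees bounds the number of vertices with many such non-neighbors. Running
the same argument with the (almost completely joined) color classes as parts yields a proper
`k`-coloring of all of `R`. Its color classes are blue cliques, so none has more than `d` vertices,
and all have exactly `d`. Now a vertex outside a class has fewer than `t` blue neighbors in it, for
otherwise there is a blue fan. The new vertex misses only `d - t` old vertices, so it has a red
neighbor in every class and many in all but one: it is an end of the critical edge of a red `G`. -/

open Finset Filter Function

/-- `G` becomes `k`-colorable when a suitable edge is deleted, in such a way that the two ends of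
that edge receive the same color. This is what edge-criticality provides when `χ(G) = k + 1`. -/
def ColorableUpToEdge {V : Type*} (G : SimpleGraph V) (k : ℕ) : Prop :=
  ∃ u v, G.Adj u v ∧ ∃ c : (G.deleteEdges {s(u, v)}).Coloring (Fin k), c u = c v

section ColorableUpToEdge

variable {V : Type*} {G : SimpleGraph V} {k : ℕ}

theorem EdgeCritical.colorableUpToEdge (hcrit : EdgeCritical G)
    (hchi : G.chromaticNumber = (k + 1 : ℕ)) : ColorableUpToEdge G k := by
  obtain ⟨u, v, huv, hdel⟩ := hcrit
  have hdel' : (G.deleteEdges {s(u, v)}).chromaticNumber = k := by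
    rw [hchi, Nat.cast_add_one] at hdel
    exact ENat.add_left_injective_of_ne_top ENat.one_ne_top hdel
  obtain ⟨c⟩ := chromaticNumber_le_iff_colorable.1 hdel'.le
  refine ⟨u, v, huv, c, ?_⟩
  by_contra hne
  have hcol : G.Colorable k := by
    refine ⟨Coloring.mk c fun {a b} hab => ?_⟩
    by_cases hs : s(a, b) = s(u, v)
    · rcases Sym2.eq_iff.1 hs with ⟨rfl, rfl⟩ | ⟨rfl, rfl⟩
      exacts [hne, Ne.symm hne]
    · exact c.valid (deleteEdges_adj.2 ⟨hab, hs⟩)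
  have hle : k + 1 ≤ k := by
    exact_mod_cast hchi ▸ chromaticNumber_le_iff_colorable.2 hcol
  omega

theorem ColorableUpToEdge.pos (hG : ColorableUpToEdge G k) : 0 < k := by
  obtain ⟨u, _, _, c, _⟩ := hG
  exact (c u).pos

theorem ColorableUpToEdge.exists_coloring (hG : ColorableUpToEdge G k) (i : Fin k) :
    ∃ u v, G.Adj u v ∧ ∃ c : (G.deleteEdges {s(u, v)}).Coloring (Fin k), c u = i ∧ c v = i := by
  obtain ⟨u, v, huv, c, hc⟩ := hG
  let σ := Equiv.swap (c u) i
  refine ⟨u, v, huv, Coloring.mk (σ ∘ c) fun hab => σ.injective.ne (c.valid hab), ?_, ?_⟩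
  · exact Equiv.swap_apply_left _ _
  · change σ (c v) = i
    rw [← hc]
    exact Equiv.swap_apply_left _ _

end ColorableUpToEdge

/-- `f` maps the subgraph of `G` induced on `s` injectively into `R`; the values of `f` outside `s`
are irrelevant. This is the state of a greedy embedding of `G` into `R`. -/
structure IsPartialCopy {V W : Type*} (G : SimpleGraph V) (R : SimpleGraph W) (s : Finset V)
    (f : V → W) : Prop where
  injOn : Set.InjOn f s
  adj : ∀ a ∈ s, ∀ b ∈ s, G.Adj a b → R.Adj (f a) (f b)

namespace IsPartialCopy

variable {V W : Type*} {G : SimpleGraph V} {R : SimpleGraph W} {s : Finset V} {f : V → W} {D : ℕ}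

theorem isContained [Fintype V] (hf : IsPartialCopy G R univ f) : G ⊑ R :=
  ⟨⟨⟨f, fun {a b} hab => hf.adj a (mem_univ a) b (mem_univ b) hab⟩,
    fun a b hab => hf.injOn (mem_univ a) (mem_univ b) hab⟩⟩

section Insert

variable [DecidableEq V]

theorem pair {u v : V} {p q : W} (huv : u ≠ v) (hpq : R.Adj p q) :
    IsPartialCopy G R {u, v} (update (fun _ => q) u p) := by
  have hv : update (fun _ => q) u p v = q := update_of_ne huv.symm _ _
  refine ⟨?_, fun a ha b hb hab => ?_⟩
  · rw [coe_pair, Set.injOn_pair, update_self, hv]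
    exact fun h => absurd h hpq.ne
  · rw [mem_insert, mem_singleton] at ha hb
    rcases ha with rfl | rfl <;> rcases hb with rfl | rfl
    · exact absurd hab G.irrefl
    · rwa [update_self, hv]
    · rw [update_self, hv]
      exact hpq.symm
    · exact absurd hab G.irrefl

theorem insert (hf : IsPartialCopy G R s f) {v : V} {y : W} (hv : v ∉ s)
    (hne : ∀ a ∈ s, f a ≠ y) (hadj : ∀ a ∈ s, G.Adj a v → R.Adj (f a) y) :
    IsPartialCopy G R (insert v s) (update f v y) := by
  have hold : ∀ a ∈ s, update f v y a = f a := fun a ha =>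
    update_of_ne (ne_of_mem_of_not_mem ha hv) _ _
  refine ⟨?_, fun a ha b hb hab => ?_⟩
  · rw [coe_insert, Set.injOn_insert (by exact_mod_cast hv), update_self]
    refine ⟨hf.injOn.congr fun a ha => (hold a ha).symm, ?_⟩
    rintro ⟨a, ha, h⟩
    exact hne a ha ((hold a ha).symm.trans h)
  · rcases mem_insert.1 ha with rfl | ha' <;> rcases mem_insert.1 hb with rfl | hb'
    · exact absurd hab G.irrefl
    · rw [update_self, hold b hb']
      exact (hadj b hb' hab.symm).symm
    · rw [update_self, hold a ha']
      exact hadj a ha' hab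
    · rw [hold a ha', hold b hb']
      exact hf.adj a ha' b hb' hab

variable [DecidableRel R.Adj]

theorem exists_insert (hf : IsPartialCopy G R s f) {v : V} (hv : v ∉ s) {T : Finset W}
    (hT : ∀ a ∈ s, G.Adj a v → #{y ∈ T | ¬R.Adj (f a) y} ≤ D) (hcard : #s * (D + 1) < #T) :
    ∃ y ∈ T, IsPartialCopy G R (Insert.insert v s) (update f v y) := by
  classical
  let forbidden : V → Finset W := fun a =>
    Insert.insert (f a) {y ∈ T | G.Adj a v ∧ ¬R.Adj (f a) y}
  have hforbidden : ∀ a ∈ s, #(forbidden a) ≤ D + 1 := by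
    intro a ha
    refine (card_insert_le _ _).trans (Nat.succ_le_succ ?_)
    by_cases hav : G.Adj a v
    · simpa only [hav, true_and] using hT a ha hav
    · simp [hav]
  obtain ⟨y, hyT, hy⟩ := exists_mem_notMem_of_card_lt_card
    ((card_biUnion_le_card_mul s forbidden _ hforbidden).trans_lt hcard)
  simp only [forbidden, mem_biUnion, mem_insert, mem_filter, not_exists, not_and, not_or,
    not_not] at hy
  exact ⟨y, hyT, hf.insert hv (fun a ha => Ne.symm (hy a ha).1)
    fun a ha hav => (hy a ha).2 hyT hav⟩

end Insert

theorem isContained_of_lt_card [Fintype V] [DecidableRel R.Adj] (hf : IsPartialCopy G R s f)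
    {T : V → Finset W} (hfT : ∀ a ∈ s, f a ∈ T a)
    (hT : ∀ a, ∀ b ∉ s, G.Adj a b → ∀ x ∈ T a, #{y ∈ T b | ¬R.Adj x y} ≤ D)
    (hcard : ∀ b ∉ s, Fintype.card V * (D + 1) < #(T b)) : G ⊑ R := by
  classical
  suffices hext : ∀ u : Finset V, ∃ g, IsPartialCopy G R (s ∪ u) g ∧ ∀ a ∈ s ∪ u, g a ∈ T a by
    obtain ⟨g, hg, -⟩ := hext univ
    rw [union_eq_right.2 (subset_univ s)] at hg
    exact hg.isContained
  intro u
  induction u using Finset.induction_on with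
  | empty => exact ⟨f, by rwa [union_empty], by rwa [union_empty]⟩
  | insert v u _ ih =>
    obtain ⟨g, hg, hgT⟩ := ih
    rw [union_insert]
    by_cases hv : v ∈ s ∪ u
    · rw [insert_eq_self.2 hv]
      exact ⟨g, hg, hgT⟩
    · have hvs : v ∉ s := fun h => hv (mem_union_left u h)
      obtain ⟨y, hy, hgy⟩ := hg.exists_insert hv
        (fun a ha hav => hT a v hvs hav (g a) (hgT a ha))
        ((Nat.mul_le_mul_right _ (card_le_univ _)).trans_lt (hcard v hvs))
      refine ⟨_, hgy, fun a ha => ?_⟩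
      rcases mem_insert.1 ha with rfl | ha'
      · rwa [update_self]
      · rw [update_of_ne (ne_of_mem_of_not_mem ha' hv)]
        exact hgT a ha'

end IsPartialCopy

theorem card_filter_le_card_filter_and_add {α : Type*} (s : Finset α) (p q : α → Prop)
    [DecidablePred p] [DecidablePred q] :
    #{a ∈ s | p a} ≤ #{a ∈ s | p a ∧ q a} + #{a ∈ s | ¬q a} := by
  classical
  refine (card_le_card fun a ha => ?_).trans (card_union_le _ _)
  grind

/-- Every vertex of each of the sets `S i` has at most `D` non-neighbors in each of the others: up
to an error of `D`, the sets are the parts of a complete multipartite subgraph of `R`. -/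
def AlmostJoined {ι W : Type*} (R : SimpleGraph W) [DecidableRel R.Adj] (D : ℕ)
    (S : ι → Finset W) : Prop :=
  Pairwise fun i j => ∀ x ∈ S i, #{y ∈ S j | ¬R.Adj x y} ≤ D

namespace AlmostJoined

variable {V W : Type*} [Fintype V] {G : SimpleGraph V} {R : SimpleGraph W} [DecidableRel R.Adj]
  {k D : ℕ} {S : Fin k → Finset W}

theorem isContained_of_adj (hS : AlmostJoined R D S) (hG : ColorableUpToEdge G k) {i : Fin k}
    {p q : W} (hpq : R.Adj p q) (hi : Fintype.card V * (D + 1) < #(S i))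
    (hj : ∀ j ≠ i, Fintype.card V * (D + 1) < #{y ∈ S j | R.Adj p y ∧ R.Adj q y}) : G ⊑ R := by
  classical
  obtain ⟨u, v, huv, c, hu, hv⟩ := hG.exists_coloring i
  -- The critical edge `u v` is sent to `p q`, all other vertices to the part named by their color.
  let T : V → Finset W := fun a => if a = u then {p} else if a = v then {q} else
    if c a = i then S i else {y ∈ S (c a) | R.Adj p y ∧ R.Adj q y}
  have hTi : ∀ b, b ∉ ({u, v} : Finset V) → c b = i → T b = S i := by grind
  have hTj : ∀ b, b ∉ ({u, v} : Finset V) → c b ≠ i →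
      T b = {y ∈ S (c b) | R.Adj p y ∧ R.Adj q y} := by grind
  have hTS : ∀ b, b ∉ ({u, v} : Finset V) → T b ⊆ S (c b) := by grind
  refine (IsPartialCopy.pair huv.ne hpq).isContained_of_lt_card (T := T) (D := D) ?_ ?_ ?_
  · grind [update_self, update_of_ne]
  · intro a b hb hab x hx
    have hc : c a ≠ c b := c.valid (deleteEdges_adj.2 ⟨hab, by grind⟩)
    by_cases ha : a ∈ ({u, v} : Finset V)
    · have hpq' : (x = p ∨ x = q) ∧ c b ≠ i := by grind
      rw [hTj b hb hpq'.2, filter_eq_empty_iff.2 (by grind), card_empty]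
      exact Nat.zero_le D
    · exact (card_le_card (filter_subset_filter _ (hTS b hb))).trans (hS hc x (hTS a ha hx))
  · intro b hb
    by_cases hbi : c b = i
    · rwa [hTi b hb hbi]
    · rw [hTj b hb hbi]
      exact hj _ hbi

theorem isContained_of_mem (hS : AlmostJoined R D S) (hG : ColorableUpToEdge G k) {i : Fin k}
    {p q : W} (hq : q ∈ S i) (hpq : R.Adj p q) (hi : Fintype.card V * (D + 1) < #(S i))
    (hj : ∀ j ≠ i, Fintype.card V * (D + 1) + D < #{y ∈ S j | R.Adj p y}) : G ⊑ R := by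
  refine hS.isContained_of_adj hG hpq hi fun j hji => ?_
  have hqj := hS hji.symm q hq
  have hle := card_filter_le_card_filter_and_add (S j) (R.Adj p) (R.Adj q)
  have hpj := hj j hji
  omega

theorem exists_card_adj_le (hS : AlmostJoined R D S) (hG : ColorableUpToEdge G k)
    (hfree : G.Free R) (hcard : ∀ i, Fintype.card V * (D + 1) < #(S i)) (p : W) :
    ∃ i, #{y ∈ S i | R.Adj p y} ≤ Fintype.card V * (D + 1) + D := by
  by_contra! hlt
  let i : Fin k := ⟨0, hG.pos⟩
  obtain ⟨q, hq⟩ := card_pos.1 ((Nat.zero_le _).trans_lt (hlt i))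
  obtain ⟨hqi, hpq⟩ := mem_filter.1 hq
  exact hfree (hS.isContained_of_mem hG hqi hpq (hcard i) fun j _ => hlt j)

end AlmostJoined

section Ramsey

variable {W : Type*} {R : SimpleGraph W}

theorem exists_isNClique_succ [DecidableRel R.Adj] {S : Finset W} {x : W} {a : ℕ}
    (hx : x ∈ S) (h : ∃ K ⊆ ({y ∈ S | R.Adj x y} : Finset W), R.IsNClique a K) :
    ∃ K ⊆ S, R.IsNClique (a + 1) K := by
  classical
  obtain ⟨K, hKS, hK⟩ := h
  exact ⟨insert x K, insert_subset hx (hKS.trans (filter_subset _ _)),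
    hK.insert fun y hy => (mem_filter.1 (hKS hy)).2⟩

theorem exists_isNClique_or_isNClique_compl (R : SimpleGraph W) (a b : ℕ) (S : Finset W)
    (hS : (a + b).choose a ≤ #S) :
    (∃ K ⊆ S, R.IsNClique a K) ∨ ∃ K ⊆ S, Rᶜ.IsNClique b K := by
  classical
  induction a generalizing b S with
  | zero => exact .inl ⟨∅, empty_subset S, isNClique_empty.2 rfl⟩
  | succ a iha =>
    induction b generalizing S with
    | zero => exact .inr ⟨∅, empty_subset S, isNClique_empty.2 rfl⟩
    | succ b ihb =>
      obtain ⟨x, hx⟩ : S.Nonempty :=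
        card_pos.1 ((Nat.choose_pos (Nat.le_add_right _ _)).trans_le hS)
      let A : Finset W := {y ∈ S | R.Adj x y}
      let B : Finset W := {y ∈ S | Rᶜ.Adj x y}
      have hSAB : S ⊆ insert x (A ∪ B) := fun y hy => by
        simp only [A, B, mem_insert, mem_union, mem_filter, compl_adj]
        tauto
      have hcard : #S ≤ #A + #B + 1 :=
        (card_le_card hSAB).trans ((card_insert_le _ _).trans (by gcongr; exact card_union_le A B))
      have hpascal : (a + 1 + (b + 1)).choose (a + 1) =
          (a + (b + 1)).choose a + (a + 1 + b).choose (a + 1) := by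
        rw [← Nat.add_assoc (a + 1) b 1, Nat.choose_succ_succ, Nat.add_right_comm a 1 b,
          Nat.add_assoc a b 1]
      have hsplit : (a + (b + 1)).choose a ≤ #A ∨ (a + 1 + b).choose (a + 1) ≤ #B := by
        omega
      rcases hsplit with hA | hB
      · refine (iha (b + 1) A hA).imp (exists_isNClique_succ hx) fun ⟨K, hKA, hK⟩ => ?_
        exact ⟨K, hKA.trans (filter_subset _ _), hK⟩
      · refine (ihb B hB).imp (fun ⟨K, hKB, hK⟩ => ?_) (exists_isNClique_succ hx)
        exact ⟨K, hKB.trans (filter_subset _ _), hK⟩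

end Ramsey

/-- `P` contains `n` pairwise disjoint cliques of `B` with `t` vertices each, the blades of a
generalized fan whose hub is adjacent to all of `P`. -/
def HasDisjointCliques {W : Type*} (B : SimpleGraph W) (n t : ℕ) (P : Finset W) : Prop :=
  ∃ T : Fin n → Finset W, (∀ i, T i ⊆ P) ∧ (∀ i, B.IsNClique t (T i)) ∧ Pairwise (Disjoint on T)

theorem fst_eq_of_genFan_adj {n t : ℕ} {p q : Fin n × Fin t}
    (h : (genFan n t).Adj (some p) (some q)) : p.1 = q.1 := by
  rcases ((fromRel_adj _ _ _).1 h).2 with (h | ⟨_, _, h₁, h₂, h⟩) | (h | ⟨_, _, h₁, h₂, h⟩)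
  · cases h
  · cases h₁; cases h₂; exact h
  · cases h
  · cases h₁; cases h₂; exact h.symm

namespace HasDisjointCliques

variable {W : Type*} {B : SimpleGraph W} {n t : ℕ} {P K : Finset W}

theorem genFan_isContained (hP : HasDisjointCliques B n t P) {x : W}
    (hx : ∀ y ∈ P, B.Adj x y) : genFan n t ⊑ B := by
  obtain ⟨T, hTP, hT, hdisj⟩ := hP
  let e : ∀ i, Fin t ≃ T i := fun i => (T i).equivFinOfCardEq (hT i).card_eq |>.symm
  let f : Option (Fin n × Fin t) → W := fun a => a.elim x fun p => e p.1 p.2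
  have hfT : ∀ p, f (some p) ∈ T p.1 := fun p => (e p.1 p.2).2
  have hxf : ∀ p, B.Adj x (f (some p)) := fun p => hx _ (hTP _ (hfT p))
  have hf : Injective f := by
    rintro (_ | p) (_ | q) h
    · rfl
    · exact absurd h (hxf q).ne
    · exact absurd h (hxf p).ne'
    · have hpq : p.1 = q.1 := by
        by_contra hne
        exact disjoint_left.1 (hdisj hne) (hfT p) (h ▸ hfT q)
      obtain ⟨i, a⟩ := p
      obtain ⟨j, b⟩ := q
      obtain rfl : i = j := hpq
      obtain rfl : a = b := (e i).injective (Subtype.ext h)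
      rfl
  refine ⟨⟨⟨f, ?_⟩, hf⟩⟩
  rintro (_ | p) (_ | q) hpq
  · exact absurd hpq (genFan n t).irrefl
  · exact hxf q
  · exact (hxf p).symm
  · have hblade : p.1 = q.1 := fst_eq_of_genFan_adj hpq
    exact (hT p.1).isClique (hfT p) (hblade ▸ hfT q) (hf.ne hpq.ne)

theorem cons [DecidableEq W] (h : HasDisjointCliques B n t (P \ K)) (hKP : K ⊆ P)
    (hK : B.IsNClique t K) : HasDisjointCliques B (n + 1) t P := by
  obtain ⟨T, hTP, hT, hdisj⟩ := h
  refine ⟨Fin.cons K T, Fin.cases hKP fun i => (hTP i).trans sdiff_subset,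
    Fin.cases hK hT, ?_⟩
  have hKT : ∀ i, Disjoint K (T i) := fun i => disjoint_of_subset_right (hTP i) disjoint_sdiff
  intro i j hij
  cases i using Fin.cases <;> cases j using Fin.cases
  · exact absurd rfl hij
  · exact hKT _
  · exact (hKT _).symm
  · exact hdisj (mt (congrArg Fin.succ) hij)

theorem of_forall_exists {C : ℕ} (h : ∀ Q ⊆ P, C ≤ #Q → ∃ K ⊆ Q, B.IsNClique t K)
    (hcard : n * t + C ≤ #P + t) : HasDisjointCliques B n t P := by
  classical
  induction n generalizing P with
  | zero => exact ⟨Fin.elim0, fun i => i.elim0, fun i => i.elim0, fun i => i.elim0⟩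
  | succ n ih =>
    rw [Nat.succ_mul] at hcard
    obtain ⟨K, hKP, hK⟩ := h P subset_rfl (by omega)
    have hPK : #(P \ K) + t = #P := hK.card_eq ▸ card_sdiff_add_card_eq_card hKP
    exact (ih (fun Q hQ => h Q (hQ.trans sdiff_subset)) (by omega)).cons hKP hK

theorem of_isClique (hP : B.IsClique (P : Set W)) (hcard : n * t ≤ #P) :
    HasDisjointCliques B n t P := by
  refine of_forall_exists (C := t) (fun Q hQP htQ => ?_) (by omega)
  obtain ⟨K, hKQ, hK⟩ := exists_subset_card_eq htQ
  exact ⟨K, hKQ, hP.subset (coe_subset.2 (hKQ.trans hQP)), hK⟩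

end HasDisjointCliques

section Fan

variable {V W : Type*} {G : SimpleGraph V} {R B : SimpleGraph W} {n t : ℕ} {P : Finset W}

theorem genFan_isContained_of_isClique (hP : B.IsClique (P : Set W)) (hcard : n * t < #P) :
    genFan n t ⊑ B := by
  classical
  obtain ⟨x, hx⟩ := card_pos.1 ((Nat.zero_le _).trans_lt hcard)
  have hPx : B.IsClique (P.erase x : Set W) := hP.subset (coe_subset.2 (erase_subset x P))
  refine (HasDisjointCliques.of_isClique hPx ?_).genFan_isContained (x := x) fun y hy => ?_
  · rw [card_erase_of_mem hx]
    omega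
  · exact hP hx (mem_of_mem_erase hy) (ne_of_mem_erase hy).symm

theorem genFan_isContained_of_isClique_of_le_card_adj [DecidableRel B.Adj]
    (hP : B.IsClique (P : Set W)) (hcard : n * t ≤ #P) (hn : 0 < n) (ht : 0 < t) {w : W}
    (hwP : w ∉ P) (hw : t ≤ #{y ∈ P | B.Adj w y}) : genFan n t ⊑ B := by
  classical
  obtain ⟨n, rfl⟩ : ∃ m, n = m + 1 := ⟨n - 1, by omega⟩
  obtain ⟨t, rfl⟩ : ∃ s, t = s + 1 := ⟨t - 1, by omega⟩
  obtain ⟨N, hN, hNcard⟩ := exists_subset_card_eq hw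
  have hNP : N ⊆ P := hN.trans (filter_subset _ _)
  have hwN : ∀ y ∈ N, B.Adj w y := fun y hy => (mem_filter.1 (hN hy)).2
  obtain ⟨x, hx⟩ : N.Nonempty := card_pos.1 (by omega)
  have hNx : B.IsNClique t (N.erase x) :=
    ⟨hP.subset (coe_subset.2 ((erase_subset x N).trans hNP)), by
      rw [card_erase_of_mem hx, hNcard, Nat.add_sub_cancel]⟩
  have hrest : HasDisjointCliques B n (t + 1) (P \ N) := by
    refine .of_isClique (hP.subset (coe_subset.2 sdiff_subset)) ?_
    rw [card_sdiff_of_subset hNP, hNcard]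
    exact Nat.le_sub_of_add_le (Nat.succ_mul n (t + 1) ▸ hcard)
  -- The hub is `x`, and `w` takes its place in the blade `N`.
  have hdiff : insert w (P.erase x) \ insert w (N.erase x) = P \ N := by grind
  have hcliques : HasDisjointCliques B (n + 1) (t + 1) (insert w (P.erase x)) :=
    (hdiff ▸ hrest).cons (insert_subset_insert w (erase_subset_erase x hNP))
      (hNx.insert fun y hy => hwN y (mem_of_mem_erase hy))
  refine hcliques.genFan_isContained (x := x) fun y hy => ?_
  rcases mem_insert.1 hy with rfl | hy
  · exact (hwN x hx).symm
  · exact hP (hNP hx) (mem_of_mem_erase hy) (ne_of_mem_erase hy).symm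

theorem isContained_of_isNClique [Fintype V] {K : Finset W}
    (hK : R.IsNClique (Fintype.card V) K) : G ⊑ R :=
  (IsContained.of_le le_top).trans <|
    (Iso.completeGraph (Fintype.equivFin V)).isContained.trans <|
      (not_cliqueFree_iff_top_isContained _).1 fun h => h K hK

theorem card_not_adj_le [Fintype V] [Fintype W] [DecidableRel R.Adj] (hG : G.Free R)
    (hfan : (genFan n t).Free Rᶜ) (x : W) :
    #{y | ¬R.Adj x y} ≤ n * t + (Fintype.card V + t).choose (Fintype.card V) := by
  classical
  let P : Finset W := {y | Rᶜ.Adj x y}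
  have hPx : ({y | ¬R.Adj x y} : Finset W) ⊆ insert x P := fun y hy => by
    simp only [P, mem_insert, mem_filter_univ, compl_adj] at hy ⊢
    tauto
  by_contra! hlt
  refine hfan (HasDisjointCliques.genFan_isContained (P := P) (x := x) ?_ fun y hy => ?_)
  · refine .of_forall_exists (fun Q _ hQ => ?_)
      (Nat.le_add_right_of_le (Nat.le_of_lt_succ (hlt.trans_le
        ((card_le_card hPx).trans (card_insert_le _ _)))))
    refine (exists_isNClique_or_isNClique_compl R _ t Q hQ).resolve_left ?_
    exact fun ⟨K, _, hK⟩ => hG (isContained_of_isNClique hK)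
  · exact (mem_filter_univ y).1 hy

end Fan

section ErdosStone

universe u

theorem card_le_minDegree_add {W : Type*} [Fintype W] [Nonempty W] {R : SimpleGraph W}
    [DecidableRel R.Adj] {E : ℕ} (hR : ∀ x, #{y | ¬R.Adj x y} ≤ E) :
    Fintype.card W ≤ R.minDegree + E := by
  suffices Fintype.card W - E ≤ R.minDegree by omega
  refine R.le_minDegree_of_forall_le_degree _ fun x => ?_
  have hsplit := card_filter_add_card_filter_not (s := univ) (R.Adj x)
  rw [card_univ, ← neighborFinset_eq_filter, card_neighborFinset_eq_degree] at hsplit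
  have hx := hR x
  omega

theorem eventually_completeEquipartiteGraph_isContained {k : ℕ} (hk : 0 < k) (M C : ℕ) :
    ∀ᶠ d : ℕ in atTop, ∀ (W : Type u) [Fintype W] (R : SimpleGraph W) [DecidableRel R.Adj],
      Fintype.card W = k * d → (∀ x, #{y | ¬R.Adj x y} ≤ d + C) →
        completeEquipartiteGraph k M ⊑ R := by
  obtain ⟨r, rfl⟩ : ∃ r, k = r + 1 := ⟨k - 1, by omega⟩
  rcases r.eq_zero_or_pos with rfl | hr
  · filter_upwards [eventually_ge_atTop M] with d hd W _ R _ hW _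
    rw [completeEquipartiteGraph_eq_bot_iff.2 (.inl le_rfl), bot_isContained_iff_card_le, hW]
    simpa using hd
  let ε : ℝ := 1 / (2 * r * (r + 1))
  have hε : 0 < ε := by positivity
  have htendsto : Tendsto (fun d : ℕ => (r + 1) * d) atTop atTop :=
    tendsto_id.const_mul_atTop' r.succ_pos
  filter_upwards [htendsto.eventually
      (eventually_completeEquipartiteGraph_isContained_of_minDegree hε r M),
    eventually_gt_atTop (2 * r * C)] with d hES hd W _ R _ hW hR
  have hW₀ : 0 < Fintype.card W := by
    rw [hW]
    exact Nat.mul_pos r.succ_pos (Nat.zero_lt_of_lt hd)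
  have : Nonempty W := Fintype.card_pos_iff.1 hW₀
  have hdeg : (r : ℝ) * d - C ≤ R.minDegree := by
    have hle := card_le_minDegree_add hR
    rw [hW, Nat.succ_mul] at hle
    have hle' : r * d ≤ R.minDegree + C := by omega
    rw [sub_le_iff_le_add]
    exact_mod_cast hle'
  have hconst : (1 - 1 / r + ε) * ((r + 1) * d : ℕ) = r * d - d / (2 * r) := by
    have hr₀ : (r : ℝ) ≠ 0 := by exact_mod_cast hr.ne'
    simp only [ε]
    push_cast
    field_simp
    ring
  have hC : (C : ℝ) ≤ d / (2 * r) := by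
    rw [le_div_iff₀ (by positivity), mul_comm]
    exact_mod_cast hd.le
  classical
  rw [isContained_congr_right (R.overFinIso hW)]
  refine hES ?_
  rw [← (R.overFinIso hW).minDegree_eq, ge_iff_le, hconst]
  linarith

theorem exists_almostJoined_zero {W : Type*} {R : SimpleGraph W} [DecidableRel R.Adj] {k M : ℕ}
    (h : completeEquipartiteGraph k M ⊑ R) :
    ∃ A : Fin k → Finset W, (∀ i, #(A i) = M) ∧ AlmostJoined R 0 A := by
  obtain ⟨φ⟩ := h
  refine ⟨fun i => univ.map ⟨fun a => φ (i, a), fun a b hab => ?_⟩, fun i => ?_, ?_⟩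
  · exact congrArg Prod.snd (φ.injective hab)
  · rw [card_map, card_univ, Fintype.card_fin]
  · intro i j hij x hx
    obtain ⟨a, _, rfl⟩ := mem_map.1 hx
    rw [Nat.le_zero, card_eq_zero, filter_eq_empty_iff]
    intro y hy
    obtain ⟨b, _, rfl⟩ := mem_map.1 hy
    exact not_not.2 (φ.toHom.map_adj (completeEquipartiteGraph_adj.2 hij))

end ErdosStone

section Counting

theorem sum_card_not_adj_le {W : Type*} [Fintype W] {R : SimpleGraph W} [DecidableRel R.Adj]
    {E : ℕ} (hR : ∀ x, #{y | ¬R.Adj x y} ≤ E) (A : Finset W) :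
    ∑ v, #{y ∈ A | ¬R.Adj v y} ≤ #A * E := by
  calc ∑ v, #{y ∈ A | ¬R.Adj v y}
      = ∑ y ∈ A, #{v | ¬R.Adj v y} :=
        sum_card_bipartiteAbove_eq_sum_card_bipartiteBelow fun v y => ¬R.Adj v y
    _ ≤ ∑ _y ∈ A, E := sum_le_sum fun y _ => by simpa only [R.adj_comm] using hR y
    _ = #A * E := sum_const_nat fun _ _ => rfl

theorem card_mul_add_card_filter_mul_le_sum {α : Type*} [Fintype α] {w : α → ℕ} {a : ℕ}
    (ha : ∀ v, a ≤ w v) (s : ℕ) :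
    Fintype.card α * a + #{v | a + s ≤ w v} * s ≤ ∑ v, w v := by
  calc Fintype.card α * a + #{v | a + s ≤ w v} * s
      = ∑ v, (a + if a + s ≤ w v then s else 0) := by
        rw [sum_add_distrib, sum_const, card_univ, smul_eq_mul, sum_ite, sum_const,
          sum_const_zero, smul_eq_mul, add_zero]
    _ ≤ ∑ v, w v := sum_le_sum fun v _ => by
        split_ifs with h
        exacts [h, ha v]

end Counting

namespace AlmostJoined

variable {V W : Type*} [Fintype V] {G : SimpleGraph V} {R : SimpleGraph W} [DecidableRel R.Adj]
  {k D : ℕ} {S : Fin k → Finset W}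

theorem not_adj (hS : AlmostJoined R D S) (hG : ColorableUpToEdge G k) (hfree : G.Free R)
    {i : Fin k} {x y : W} (hi : Fintype.card V * (D + 1) < #(S i))
    (hj : ∀ j ≠ i, Fintype.card V * (D + 1) + #{z ∈ S j | ¬R.Adj x z} + #{z ∈ S j | ¬R.Adj y z}
      < #(S j)) : ¬R.Adj x y := by
  refine fun hxy => hfree (hS.isContained_of_adj hG hxy hi fun j hji => ?_)
  have hx := card_filter_add_card_filter_not (s := S j) fun z => R.Adj x z
  have hy := card_filter_le_card_filter_and_add (S j) (R.Adj x) (R.Adj y)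
  have hxy := hj j hji
  omega

end AlmostJoined

section ApproximatePartition

universe u

variable {V : Type*} {G : SimpleGraph V} {k : ℕ}

theorem AlmostJoined.ne_of_adj [Fintype V] {W : Type*} {R : SimpleGraph W}
    [DecidableRel R.Adj] {s : ℕ} {A : Fin k → Finset W} (hA : AlmostJoined R 0 A)
    (hcard : ∀ i, #(A i) = Fintype.card V + (2 * s + 1)) (hG : ColorableUpToEdge G k)
    (hfree : G.Free R) {f : W → Fin k} (hf : ∀ v, 2 * s + 1 ≤ #{y ∈ A (f v) | ¬R.Adj v y}) {x y : W}
    (hx : ∑ i, #{z ∈ A i | ¬R.Adj x z} < 2 * s + 1 + s)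
    (hy : ∑ i, #{z ∈ A i | ¬R.Adj y z} < 2 * s + 1 + s) (hxy : R.Adj x y) : f x ≠ f y := by
  intro hfxy
  have hsmall : ∀ v, ∑ i, #{z ∈ A i | ¬R.Adj v z} < 2 * s + 1 + s → ∀ j ≠ f v,
      #{z ∈ A j | ¬R.Adj v z} < s := by
    intro v hv j hj
    have hpair := add_le_sum (s := univ) (f := fun i => #{z ∈ A i | ¬R.Adj v z})
      (fun _ _ => Nat.zero_le _) (mem_univ (f v)) (mem_univ j) hj.symm
    have hfv := hf v
    omega
  refine hA.not_adj hG hfree (i := f x) (by rw [hcard]; omega) (fun j hj => ?_) hxy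
  have hxj := hsmall x hx j hj
  have hyj := hsmall y hy j (hfxy ▸ hj)
  rw [hcard]
  omega

theorem eventually_exists_approximate_coloring [Finite V] (hG : ColorableUpToEdge G k) (C q : ℕ) :
    ∀ᶠ d : ℕ in atTop, ∀ (W : Type u) [Fintype W] (R : SimpleGraph W) [DecidableRel R.Adj],
      G.Free R → Fintype.card W = k * d → (∀ x, #{y | ¬R.Adj x y} ≤ d + C) →
        ∃ (f : W → Fin k) (B : Finset W), q * #B ≤ d ∧
          ∀ x ∉ B, ∀ y ∉ B, R.Adj x y → f x ≠ f y := by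
  have := Fintype.ofFinite V
  let m := Fintype.card V
  let s := q * (k * m + 1)
  let M := m + (2 * s + 1)
  filter_upwards [eventually_completeEquipartiteGraph_isContained hG.pos M C,
    eventually_ge_atTop (k * M * C)] with d hES hd W _ R _ hfree hW hR
  obtain ⟨A, hAM, hA⟩ := exists_almostJoined_zero (hES W R hW hR)
  have hlarge : ∀ v, ∃ i, 2 * s + 1 ≤ #{y ∈ A i | ¬R.Adj v y} := by
    intro v
    obtain ⟨i, hi⟩ := hA.exists_card_adj_le hG hfree (fun i => by rw [hAM]; omega) v
    have hsplit := card_filter_add_card_filter_not (s := A i) fun z => R.Adj v z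
    rw [hAM] at hsplit
    exact ⟨i, by omega⟩
  choose f hf using hlarge
  -- `w` is at least `2 * s + 1` everywhere, and its mean, at most `M * (1 + C / d)`, is hardly
  -- larger because `M = m + (2 * s + 1)`; Markov's inequality therefore bounds the set `B`.
  let w : W → ℕ := fun v => ∑ i, #{y ∈ A i | ¬R.Adj v y}
  let B : Finset W := {v | 2 * s + 1 + s ≤ w v}
  refine ⟨f, B, ?_, fun x hx y hy => ?_⟩
  · have hw : ∀ v, 2 * s + 1 ≤ w v := fun v => (hf v).trans <|
      single_le_sum (f := fun i => #{y ∈ A i | ¬R.Adj v y}) (fun _ _ => Nat.zero_le _) (mem_univ _)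
    have hsum : ∑ v, w v ≤ k * (M * (d + C)) := by
      rw [sum_comm]
      refine (sum_le_card_nsmul univ _ (M * (d + C)) fun i _ => ?_).trans_eq (by simp)
      exact hAM i ▸ sum_card_not_adj_le hR (A i)
    have hmarkov := (card_mul_add_card_filter_mul_le_sum hw s).trans hsum
    rw [hW] at hmarkov
    refine Nat.le_of_mul_le_mul_right (c := k * m + 1) ?_ (Nat.succ_pos _)
    calc q * #B * (k * m + 1) = #B * s := by ring
      _ ≤ d * (k * m) + k * M * C := by
        rw [← Nat.add_le_add_iff_left (n := k * d * (2 * s + 1))]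
        exact hmarkov.trans_eq (by ring)
      _ ≤ d * (k * m + 1) := Nat.add_le_add_left hd _
  · simp only [B, mem_filter_univ, not_le] at hx hy
    exact hA.ne_of_adj hAM hG hfree hf hx hy

end ApproximatePartition

section ExactPartition

universe u

variable {V W : Type*} {G : SimpleGraph V} {R : SimpleGraph W} {k b d C : ℕ}

theorem le_card_filter_eq_add {U : Finset W} {f : W → Fin k} (hU : k * d ≤ #U + b)
    (h : ∀ j, #{v ∈ U | f v = j} ≤ d) (i : Fin k) : d ≤ #{v ∈ U | f v = i} + b := by
  have hfibers : #U = ∑ j, #{v ∈ U | f v = j} :=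
    card_eq_sum_card_fiberwise fun v _ => mem_univ (f v)
  have hrest : ∑ j ∈ univ.erase i, #{v ∈ U | f v = j} ≤ (k - 1) * d := by
    refine (sum_le_card_nsmul _ _ d fun j _ => h j).trans_eq ?_
    rw [card_erase_of_mem (mem_univ i), card_univ, Fintype.card_fin, smul_eq_mul]
  rw [← add_sum_erase univ _ (mem_univ i)] at hfibers
  have hk : k * d = (k - 1) * d + d := by
    rw [← Nat.succ_mul, Nat.succ_eq_add_one, Nat.sub_add_cancel i.pos]
  omega

theorem card_filter_add_card_filter_le [Fintype W] {s t : Finset W} (hst : Disjoint s t)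
    (p : W → Prop) [DecidablePred p] : #{a ∈ s | p a} + #{a ∈ t | p a} ≤ #{a | p a} := by
  classical
  rw [← card_union_of_disjoint (disjoint_filter_filter hst), ← filter_union]
  exact card_le_card (filter_subset_filter p (subset_univ _))

variable [Fintype W]

theorem card_filter_coloring_eq (hW : Fintype.card W = k * d) (hindep : R.indepNum ≤ d)
    (c : R.Coloring (Fin k)) (i : Fin k) : #{v | c v = i} = d := by
  have hle : ∀ j, #{v | c v = j} ≤ d := fun j => by
    refine IsIndepSet.card_le_indepNum (G := R) ?_ |>.trans hindep
    rw [coe_filter_univ]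
    exact c.isIndepSet_colorClass j
  exact (hle i).antisymm (le_card_filter_eq_add (b := 0) hW.ge hle i)

variable [DecidableRel R.Adj] {S : Fin k → Finset W}

theorem AlmostJoined.of_isIndepSet (hdisj : Pairwise (Disjoint on S))
    (hS : ∀ i, R.IsIndepSet (S i : Set W)) (hcard : ∀ i, d ≤ #(S i) + b)
    (hR : ∀ x, #{y | ¬R.Adj x y} ≤ d + C) : AlmostJoined R (b + C) S := by
  intro i j hij x hx
  have hi : {y ∈ S i | ¬R.Adj x y} = S i := filter_true_of_mem fun y hy hxy =>
    hS i hx hy hxy.ne hxy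
  have hle := (card_filter_add_card_filter_le (hdisj hij) (fun y => ¬R.Adj x y)).trans (hR x)
  rw [hi] at hle
  have hdi := hcard i
  omega

theorem AlmostJoined.colorable [Fintype V] (hS : AlmostJoined R (b + C) S)
    (hdisj : Pairwise (Disjoint on S)) (hcard : ∀ i, d ≤ #(S i) + b)
    (hR : ∀ x, #{y | ¬R.Adj x y} ≤ d + C) (hG : ColorableUpToEdge G k) (hfree : G.Free R)
    (hd : 3 * (Fintype.card V * (b + C + 1)) + 4 * (b + C) + b < d) : R.Colorable k := by
  set L := Fintype.card V * (b + C + 1)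
  have hlarge : ∀ i, L < #(S i) := fun i => by
    have hdi := hcard i
    omega
  choose c hc using hS.exists_card_adj_le hG hfree hlarge
  have hnonadj : ∀ x, ∀ j ≠ c x, #{y ∈ S j | ¬R.Adj x y} ≤ L + 2 * (b + C) := by
    intro x j hj
    have hsplit := card_filter_add_card_filter_not (s := S (c x)) fun y => R.Adj x y
    have hle := (card_filter_add_card_filter_le (hdisj hj) (fun y => ¬R.Adj x y)).trans (hR x)
    have hcx := hc x
    have hdc := hcard (c x)
    omega
  refine ⟨Coloring.mk c fun {x y} hxy hcxy => ?_⟩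
  refine hS.not_adj hG hfree (hlarge (c x)) (fun j hj => ?_) hxy
  have hx := hnonadj x j hj
  have hy := hnonadj y j (hcxy ▸ hj)
  have hdj := hcard j
  omega

theorem eventually_exists_balanced_coloring [Finite V] (hG : ColorableUpToEdge G k) (C : ℕ) :
    ∀ᶠ d : ℕ in atTop, ∀ (W : Type u) [Fintype W] (R : SimpleGraph W) [DecidableRel R.Adj],
      G.Free R → Fintype.card W = k * d → (∀ x, #{y | ¬R.Adj x y} ≤ d + C) → R.indepNum ≤ d →
        ∃ c : R.Coloring (Fin k), ∀ i, #{v | c v = i} = d := by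
  classical
  have := Fintype.ofFinite V
  let m := Fintype.card V
  filter_upwards [eventually_exists_approximate_coloring hG C (2 * (3 * m + 5)),
    eventually_gt_atTop (2 * (3 * m * (C + 1) + 4 * C))]
    with d happrox hd W _ R _ hfree hW hR hindep
  obtain ⟨f, B, hB, hf⟩ := happrox W R hfree hW hR
  let S : Fin k → Finset W := fun i => {v ∈ Bᶜ | f v = i}
  have hS : ∀ i, R.IsIndepSet (S i : Set W) := fun i x hx y hy _ hxy => by
    simp only [S, coe_filter, mem_compl, Set.mem_ofPred_eq] at hx hy
    exact hf x hx.1 y hy.1 hxy (hx.2.trans hy.2.symm)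
  have hdisj : Pairwise (Disjoint on S) := fun i j hij =>
    disjoint_filter.2 fun v _ hi hj => hij (hi.symm.trans hj)
  have hcard : ∀ i, d ≤ #(S i) + #B := le_card_filter_eq_add
    (by rw [card_compl_add_card, hW]) fun i => (hS i).card_le_indepNum.trans hindep
  obtain ⟨c⟩ := (AlmostJoined.of_isIndepSet hdisj hS hcard hR).colorable hdisj hcard hR hG hfree
    (by linarith)
  exact ⟨c, card_filter_coloring_eq hW hindep c⟩

end ExactPartition

section ExtraVertex

variable {V W : Type*} [Fintype V] {G : SimpleGraph V} {R B : SimpleGraph W} {k n t : ℕ}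
  {S : Fin k → Finset W}

theorem AlmostJoined.isContained_of_card_not_adj_add_le [DecidableRel R.Adj] {D d e : ℕ}
    (hS : AlmostJoined R D S) (hG : ColorableUpToEdge G k) (hcard : ∀ i, #(S i) = d) {w : W}
    (hlt : ∀ i, #{y ∈ S i | ¬R.Adj w y} < d)
    (hadd : Pairwise fun i j => #{y ∈ S i | ¬R.Adj w y} + #{y ∈ S j | ¬R.Adj w y} ≤ d + e)
    (hd : 2 * (Fintype.card V * (D + 1) + D) + e < d) : G ⊑ R := by
  have : Nonempty (Fin k) := ⟨⟨0, hG.pos⟩⟩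
  obtain ⟨i, -, hmax⟩ := exists_max_image univ (fun i => #{y ∈ S i | ¬R.Adj w y}) univ_nonempty
  have hsplit : ∀ j, #{y ∈ S j | R.Adj w y} + #{y ∈ S j | ¬R.Adj w y} = d := fun j =>
    (card_filter_add_card_filter_not _).trans (hcard j)
  obtain ⟨q, hq⟩ : {y ∈ S i | R.Adj w y}.Nonempty := card_pos.1 <| by
    have hi := hsplit i
    have hilt := hlt i
    omega
  obtain ⟨hqi, hwq⟩ := mem_filter.1 hq
  refine hS.isContained_of_mem hG hqi hwq (by rw [hcard]; omega) fun j hj => ?_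
  have hji := hmax j (mem_univ j)
  have hij := hadd hj
  have hj := hsplit j
  omega

theorem isContained_of_isClique_of_genFan_free [Finite W] (hG : ColorableUpToEdge G k)
    (ht : 0 < t) (hn : 2 * (Fintype.card V * (t + 1) + t) + t < n * t)
    (hdisj : Pairwise (Disjoint on S)) (hS : ∀ i, B.IsClique (S i : Set W))
    (hcard : ∀ i, #(S i) = n * t)
    (hRB : Pairwise fun i j => ∀ x ∈ S i, ∀ y ∈ S j, R.Adj x y ∨ B.Adj x y)
    {w : W} (hw : ∀ i, w ∉ S i) {X : Finset W} (hX : #X + t ≤ n * t)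
    (hwX : ∀ i, ∀ y ∈ S i, y ∉ X → R.Adj w y ∨ B.Adj w y) (hfan : (genFan n t).Free B) :
    G ⊑ R := by
  classical
  have := Fintype.ofFinite W
  have hblue : ∀ i, ∀ x ∉ S i, #{y ∈ S i | B.Adj x y} < t := by
    intro i x hx
    by_contra! hle
    exact hfan (genFan_isContained_of_isClique_of_le_card_adj (hS i) (hcard i).ge
      (Nat.pos_of_mul_pos_right (Nat.zero_lt_of_lt hn)) ht hx hle)
  have hjoined : AlmostJoined R t S := fun i j hij x hx => by
    have hsub : {y ∈ S j | ¬R.Adj x y} ⊆ {y ∈ S j | B.Adj x y} := fun y hy => by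
      obtain ⟨hyj, hxy⟩ := mem_filter.1 hy
      exact mem_filter.2 ⟨hyj, (hRB hij x hx y hyj).resolve_left hxy⟩
    exact (card_le_card hsub).trans (hblue j x (disjoint_left.1 (hdisj hij) hx)).le
  have hnonadj : ∀ i, #{y ∈ S i | ¬R.Adj w y} < t + #{y ∈ S i | y ∈ X} := fun i => by
    have hsub : {y ∈ S i | ¬R.Adj w y} ⊆ {y ∈ S i | B.Adj w y} ∪ {y ∈ S i | y ∈ X} := by
      grind
    exact (card_le_card hsub).trans_lt <| (card_union_le _ _).trans_lt <|
      Nat.add_lt_add_right (hblue i w (hw i)) _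
  refine hjoined.isContained_of_card_not_adj_add_le hG hcard (w := w) (e := t)
    (fun i => (hnonadj i).trans_le ?_) (fun i j hij => ?_) hn
  · have hXi : #{y ∈ S i | y ∈ X} ≤ #X := card_le_card fun y hy => (mem_filter.1 hy).2
    omega
  · have hXij := card_filter_add_card_filter_le (hdisj hij) (· ∈ X)
    rw [filter_univ_mem] at hXij
    have hi := hnonadj i
    have hj := hnonadj j
    omega

end ExtraVertex

section Core

universe u

theorem indepNum_le_of_genFan_free {W : Type*} {R : SimpleGraph W} {n t : ℕ}
    (hfan : (genFan n t).Free Rᶜ) : R.indepNum ≤ n * t := by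
  obtain ⟨P, hP⟩ := R.exists_isNIndepSet_indepNum
  rw [← isNClique_compl] at hP
  by_contra! hlt
  exact hfan (genFan_isContained_of_isClique hP.isClique (hP.card_eq ▸ hlt))

theorem isContained_of_balanced_coloring_of_genFan_free {V : Type*} [Fintype V]
    {G : SimpleGraph V} {k n t : ℕ} (hG : ColorableUpToEdge G k) (ht : 0 < t)
    (hn : 2 * (Fintype.card V * (t + 1) + t) + t < n * t) {W : Type*} [Fintype W]
    {R B : SimpleGraph (Option W)} (c : (R.comap some).Coloring (Fin k))
    (hc : ∀ i, #{v | c v = i} = n * t)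
    (hRB : ∀ a b, a ≠ b → R.Adj (some a) (some b) ∨ B.Adj (some a) (some b)) {X : Finset W}
    (hX : #X + t ≤ n * t) (hnone : ∀ a ∉ X, R.Adj none (some a) ∨ B.Adj none (some a))
    (hfan : (genFan n t).Free B) : G ⊑ R := by
  let S : Fin k → Finset (Option W) := fun i => ({v | c v = i} : Finset W).map .some
  have hS : ∀ i y, y ∈ S i ↔ ∃ a, c a = i ∧ some a = y := fun i y => by simp [S]
  have hdisj : Pairwise (Disjoint on S) := fun i j hij =>
    (Finset.disjoint_map _).2 (disjoint_filter.2 fun a _ hi hj => hij (hi.symm.trans hj))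
  have hclique : ∀ i, B.IsClique (S i : Set (Option W)) := fun i x hx y hy hxy => by
    obtain ⟨a, rfl, rfl⟩ := (hS i x).1 hx
    obtain ⟨b, hab, rfl⟩ := (hS _ y).1 hy
    exact (hRB a b (ne_of_apply_ne some hxy)).resolve_left fun h => c.valid h hab.symm
  refine isContained_of_isClique_of_genFan_free (w := none) (X := X.map .some) hG ht hn hdisj
    hclique (fun i => (card_map _).trans (hc i)) (fun i j hij x hx y hy => ?_) (fun i hi => ?_)
    (by rwa [card_map]) (fun i y hy hyX => ?_) hfan
  · obtain ⟨a, rfl, rfl⟩ := (hS i x).1 hx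
    obtain ⟨b, rfl, rfl⟩ := (hS j y).1 hy
    exact hRB a b (ne_of_apply_ne c hij)
  · obtain ⟨a, -, ha⟩ := (hS i none).1 hi
    exact Option.some_ne_none a ha
  · obtain ⟨a, -, rfl⟩ := (hS i y).1 hy
    exact hnone a fun ha => hyX (mem_map_of_mem _ ha)

theorem eventually_isContained_or_genFan_isContained {V : Type*} [Finite V] {G : SimpleGraph V}
    {k t : ℕ} (hG : ColorableUpToEdge G k) (ht : 0 < t) :
    ∀ᶠ n : ℕ in atTop, ∀ (W : Type u) [Fintype W] (R B : SimpleGraph (Option W)) (X : Finset W),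
      Fintype.card W = k * (n * t) → #X + t ≤ n * t →
      (∀ a b, a ≠ b → R.Adj (some a) (some b) ∨ B.Adj (some a) (some b)) →
      (∀ a ∉ X, R.Adj none (some a) ∨ B.Adj none (some a)) → G ⊑ R ∨ genFan n t ⊑ B := by
  classical
  have := Fintype.ofFinite V
  let m := Fintype.card V
  have htendsto : Tendsto (fun n : ℕ => n * t) atTop atTop := tendsto_id.atTop_mul_const' ht
  filter_upwards [htendsto.eventually (eventually_exists_balanced_coloring hG ((m + t).choose m)),
    htendsto.eventually (eventually_gt_atTop (2 * (m * (t + 1) + t) + t))]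
    with n hcoloring hn W _ R B X hW hX hRB hnone
  by_contra hnot
  obtain ⟨hGR, hfan⟩ := not_or.1 hnot
  let R' : SimpleGraph W := R.comap some
  have hGR' : G.Free R' := fun h =>
    hGR (h.trans (Embedding.comap Function.Embedding.some R).isContained)
  have hR'B : R'ᶜ ≤ B.comap some := fun a b hab => (hRB a b hab.1).resolve_left hab.2
  have hfan' : (genFan n t).Free R'ᶜ := fun h => hfan <|
    (h.trans (.of_le hR'B)).trans (Embedding.comap Function.Embedding.some B).isContained
  obtain ⟨c, hc⟩ := hcoloring W R' hGR' hW (card_not_adj_le hGR' hfan')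
    (indepNum_le_of_genFan_free hfan')
  exact hGR (isContained_of_balanced_coloring_of_genFan_free hG ht hn c hc hRB hX hnone hfan)

end Core

theorem containsCopy_iff_isContained {V W : Type*} {F : SimpleGraph V} {G : SimpleGraph W} :
    containsCopy F G ↔ G ⊑ F :=
  ⟨fun ⟨f, hf⟩ => ⟨⟨f, hf⟩⟩, fun ⟨f⟩ => ⟨f.toHom, f.injective⟩⟩

theorem KstarK_adj_some_some {m ℓ : ℕ} {a b : Fin m} (hab : a ≠ b) :
    (KstarK m ℓ).Adj (some a) (some b) := by
  simp [KstarK, hab]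

theorem KstarK_adj_none_some {m ℓ : ℕ} {b : Fin m} (hb : (b : ℕ) < ℓ) :
    (KstarK m ℓ).Adj none (some b) := by
  simp [KstarK, hb]

theorem statement_4_general (k t : ℕ) (ht : 0 < t) {V : Type*} [Finite V] (G : SimpleGraph V)
    (hchi : G.chromaticNumber = (k + 1 : ℕ)) (hcrit : EdgeCritical G) :
    ∃ n₀ : ℕ, ∀ n : ℕ, n₀ ≤ n →
      starArrows (k * n * t) ((k - 1) * n * t + t) G (genFan n t) := by
  have hG := hcrit.colorableUpToEdge hchi
  obtain ⟨k, rfl⟩ := Nat.exists_eq_add_one.2 hG.pos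
  rw [← eventually_atTop]
  filter_upwards [eventually_isContained_or_genFan_isContained hG ht, eventually_ge_atTop 1]
    with n hcore hn R _
  simp only [containsCopy_iff_isContained]
  refine hcore _ R _ {a | ¬(a : ℕ) < k * n * t + t} ?_ ?_ (fun a b hab => ?_) (fun a ha => ?_)
  · rw [Fintype.card_fin, mul_assoc]
  · have htn : t ≤ n * t := Nat.le_mul_of_pos_left t hn
    have hsplit := card_filter_add_card_filter_not (s := (univ : Finset (Fin ((k + 1) * n * t))))
      (fun a => (a : ℕ) < k * n * t + t)
    rw [Fin.card_filter_val_lt, card_univ, Fintype.card_fin] at hsplit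
    have : (k + 1) * n * t = k * n * t + n * t := by ring
    omega
  · exact or_iff_not_imp_left.2 fun h => ⟨KstarK_adj_some_some hab, h⟩
  · exact or_iff_not_imp_left.2 fun h => ⟨KstarK_adj_none_some (by simpa using ha), h⟩

theorem statement_4 (k t : ℕ) (hk : 2 ≤ k) (ht : 2 ≤ t)
    {V : Type*} [Fintype V] (G : SimpleGraph V)
    (hchi : G.chromaticNumber = (k + 1 : ℕ)) (hcrit : EdgeCritical G) :
    ∃ n₀ : ℕ, ∀ n : ℕ, n₀ ≤ n →
      starArrows (k * n * t) ((k - 1) * n * t + t) G (genFan n t) :=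
  statement_4_general k t (Nat.zero_lt_of_lt ht) G hchi hcrit
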